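/- arXiv:1909.00491 — 2 statements merged into one kernel-verified Lean document; each statement's English description precedes it below -/
import Mathlib

section
/- (A posteriori residual lower bound / local efficiency.) Let Ω ⊆ ℝ^d be a bounded open set, ω ⊆ Ω an open subset, 0 ≤ θ ≤ 1, and A : Ω → Sym_d(ℝ), b : Ω → ℝ^d, c : Ω → [0,∞) measurable and essentially bounded. Let u : ℝ^d → ℝ be twice continuously differentiable with A : D²u + b·∇u − cu = f almost everywhere in Ω, u_h : ℝ^d → ℝ of class C¹, g_h : ℝ^d → ℝ^d of class C¹, H_h : Ω → Sym_d(ℝ) measurable and square-integrable (with all integrals below finite). Then ∫_ω ‖∇u_h − g_h‖² + ∫_ω ‖Dg_h − H_h‖_F² + (1/2)∫_ω ‖Dg_h − Dg_hᵀ‖_F² + ∫_ω (L_θ(u_h, g_h, H_h) − f)² ≤ C_ω·( ‖u − u_h‖²_{H¹(ω)} + ‖∇u − g_h‖²_{H¹(ω)} + ∫_ω ‖D²u − H_h‖_F² ), where C_ω = 5·( max( ‖c‖_{L^∞(ω)}, 1 + d(1−θ)‖b‖_{L^∞(ω)}, 1 + dθ‖b‖_{L^∞(ω)}, 1 + √2,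 1 + d²‖A‖_{L^∞(ω)} ) )². -/
/-!
The estimate holds pointwise almost everywhere and is then integrated over `ω`. With
`e₀ = u - u_h`, `e₁ = ∇(u - u_h)`, `e₂ = ∇u - g_h`, `M = D(∇u - g_h)` and `E = D²u - H_h`:

* `∇u_h - g_h = e₂ - e₁` and `Dg_h - H_h = E - M`, so their squares are at most twice the sum
  of the squares;
* `D²u` is symmetric (Schwarz), hence `Dg_h - Dg_hᵀ = Mᵀ - M`, of squared norm at most `4‖M‖²`;
* by the equation, `f - L_θ(u_h, g_h, H_h) = A : E + θ b·e₂ + (1-θ) b·e₁ - c e₀`, whose square is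
  at most four times the sum of four squares, each bounded by Cauchy-Schwarz
  (`sq_smul_dot_le`, `sq_frobInner_le`) by `C²` times the squared error, `C` being the maximum
  in the statement.

The worst coefficient is `2 + 4 C²`, which is at most `5 C²` because `C ≥ 1 + √2`.
-/

open MeasureTheory Matrix Finset Bornology

noncomputable section

/-- Frobenius inner product of two real `d × d` matrices. -/
def frobInner {d : ℕ} (M N : Matrix (Fin d) (Fin d) ℝ) : ℝ :=
  ∑ i, ∑ j, M i j * N i j

/-- Squared Frobenius norm of a real `d × d` matrix. -/
def frobSq {d : ℕ} (M : Matrix (Fin d) (Fin d) ℝ) : ℝ := frobInner M M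

/-- Squared Euclidean norm of a vector in `ℝ^d`. -/
def vecSq {d : ℕ} (v : Fin d → ℝ) : ℝ := ∑ i, v i ^ 2

/-- Jacobian matrix of a vector field `ψ : ℝ^d → ℝ^d`, `(jac ψ x) i j = ∂_j ψ_i (x)`. -/
def jac {d : ℕ} (ψ : (Fin d → ℝ) → (Fin d → ℝ)) (x : Fin d → ℝ) :
    Matrix (Fin d) (Fin d) ℝ :=
  Matrix.of fun i j => fderiv ℝ ψ x (Pi.single j 1) i

/-- Gradient of a scalar field `φ : ℝ^d → ℝ`. -/
def grad' {d : ℕ} (φ : (Fin d → ℝ) → ℝ) (x : Fin d → ℝ) : Fin d → ℝ :=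
  fun i => fderiv ℝ φ x (Pi.single i 1)

/-- Divergence of a vector field `ψ : ℝ^d → ℝ^d`. -/
def divg {d : ℕ} (ψ : (Fin d → ℝ) → (Fin d → ℝ)) (x : Fin d → ℝ) : ℝ :=
  ∑ i, jac ψ x i i

/-- Hessian matrix of a scalar field `u : ℝ^d → ℝ`. -/
def hess {d : ℕ} (u : (Fin d → ℝ) → ℝ) (x : Fin d → ℝ) : Matrix (Fin d) (Fin d) ℝ :=
  jac (grad' u) x

/-- The operator `L_θ(φ, ψ, Ξ) := A : Ξ + b·(θψ + (1−θ)∇φ) − cφ` evaluated at `x`. -/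
def Ltheta {d : ℕ} (A : (Fin d → ℝ) → Matrix (Fin d) (Fin d) ℝ)
    (b : (Fin d → ℝ) → Fin d → ℝ) (c : (Fin d → ℝ) → ℝ) (θ : ℝ)
    (φ : (Fin d → ℝ) → ℝ) (ψ : (Fin d → ℝ) → (Fin d → ℝ))
    (Ξ : (Fin d → ℝ) → Matrix (Fin d) (Fin d) ℝ) (x : Fin d → ℝ) : ℝ :=
  frobInner (A x) (Ξ x)
    + (∑ i, b x i * (θ * ψ x i + (1 - θ) * grad' φ x i)) - c x * φ x

lemma vecSq_nonneg {d : ℕ} (v : Fin d → ℝ) : 0 ≤ vecSq v :=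
  Finset.sum_nonneg fun _ _ => sq_nonneg _

lemma frobSq_eq {d : ℕ} (M : Matrix (Fin d) (Fin d) ℝ) : frobSq M = ∑ i, ∑ j, M i j ^ 2 := by
  simp [frobSq, frobInner, sq]

lemma frobSq_nonneg {d : ℕ} (M : Matrix (Fin d) (Fin d) ℝ) : 0 ≤ frobSq M := by
  rw [frobSq_eq]
  exact Finset.sum_nonneg fun _ _ => Finset.sum_nonneg fun _ _ => sq_nonneg _

lemma frobSq_transpose {d : ℕ} (M : Matrix (Fin d) (Fin d) ℝ) : frobSq Mᵀ = frobSq M := by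
  rw [frobSq_eq, frobSq_eq, Finset.sum_comm]
  rfl

lemma vecSq_sub_le {d : ℕ} (v w : Fin d → ℝ) :
    (vecSq fun i => v i - w i) ≤ 2 * vecSq v + 2 * vecSq w := by
  unfold vecSq
  rw [Finset.mul_sum, Finset.mul_sum, ← Finset.sum_add_distrib]
  refine Finset.sum_le_sum fun i _ => ?_
  nlinarith [sq_nonneg (v i + w i)]

lemma frobSq_sub_le {d : ℕ} (M N : Matrix (Fin d) (Fin d) ℝ) :
    frobSq (M - N) ≤ 2 * frobSq M + 2 * frobSq N := by
  simp only [frobSq_eq, Finset.mul_sum, ← Finset.sum_add_distrib, Matrix.sub_apply]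
  refine Finset.sum_le_sum fun i _ => Finset.sum_le_sum fun j _ => ?_
  nlinarith [sq_nonneg (M i j + N i j)]

/-- Cauchy-Schwarz for `t b·v`. In dimension `0`, `hC` gives no bound on `β`, but both
sides vanish. -/
lemma sq_smul_dot_le {d : ℕ} (b v : Fin d → ℝ) {t β C : ℝ} (ht : 0 ≤ t)
    (hb : Real.sqrt (vecSq b) ≤ β) (hC : 1 + (d : ℝ) * t * β ≤ C) :
    (t * ∑ i, b i * v i) ^ 2 ≤ C ^ 2 * vecSq v := by
  rcases Nat.eq_zero_or_pos d with rfl | hd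
  · simp [vecSq]
  have hβ : 0 ≤ β := (Real.sqrt_nonneg _).trans hb
  have hd1 : (1 : ℝ) ≤ d := by exact_mod_cast hd
  have htβ : 0 ≤ t * β := mul_nonneg ht hβ
  have h1 : t * β ≤ C := by nlinarith
  have h2 : vecSq b ≤ β ^ 2 := (Real.sqrt_le_left hβ).mp hb
  have hcs : (∑ i, b i * v i) ^ 2 ≤ vecSq b * vecSq v :=
    Finset.sum_mul_sq_le_sq_mul_sq _ _ _
  have hv := vecSq_nonneg v
  calc (t * ∑ i, b i * v i) ^ 2 = t ^ 2 * (∑ i, b i * v i) ^ 2 := by ring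
    _ ≤ t ^ 2 * (β ^ 2 * vecSq v) := by gcongr; exact hcs.trans (by gcongr)
    _ = (t * β) ^ 2 * vecSq v := by ring
    _ ≤ C ^ 2 * vecSq v := by gcongr

/-- Cauchy-Schwarz for the Frobenius product; as in `sq_smul_dot_le`, both sides vanish in
dimension `0`. -/
lemma sq_frobInner_le {d : ℕ} (M N : Matrix (Fin d) (Fin d) ℝ) {α C : ℝ}
    (hM : Real.sqrt (frobSq M) ≤ α) (hC : 1 + (d : ℝ) ^ 2 * α ≤ C) :
    (frobInner M N) ^ 2 ≤ C ^ 2 * frobSq N := by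
  rcases Nat.eq_zero_or_pos d with rfl | hd
  · simp [frobSq, frobInner]
  have hα : 0 ≤ α := (Real.sqrt_nonneg _).trans hM
  have hd1 : (1 : ℝ) ≤ (d : ℝ) ^ 2 := one_le_pow₀ (by exact_mod_cast hd)
  have h1 : α ≤ C := by nlinarith
  have h2 : frobSq M ≤ α ^ 2 := (Real.sqrt_le_left hα).mp hM
  have hcs : (frobInner M N) ^ 2 ≤ frobSq M * frobSq N := by
    have := Finset.sum_mul_sq_le_sq_mul_sq (Finset.univ : Finset (Fin d × Fin d))
      (fun p => M p.1 p.2) (fun p => N p.1 p.2)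
    simpa only [frobSq_eq, frobInner, Fintype.sum_prod_type] using this
  have hN := frobSq_nonneg N
  exact hcs.trans (by gcongr; exact h2.trans (by gcongr))

lemma differentiable_grad' {d : ℕ} {u : (Fin d → ℝ) → ℝ} (hu : ContDiff ℝ 2 u) :
    Differentiable ℝ (grad' u) := by
  have h : Differentiable ℝ (fderiv ℝ u) :=
    (hu.fderiv_right (m := 1) (by norm_num)).differentiable (by norm_num)
  rw [differentiable_pi]
  intro i
  exact h.clm_apply (differentiable_const _)

lemma hess_isSymm {d : ℕ} {u : (Fin d → ℝ) → ℝ} (hu : ContDiff ℝ 2 u) (x : Fin d → ℝ) :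
    (hess u x)ᵀ = hess u x := by
  have h : Differentiable ℝ (fderiv ℝ u) :=
    (hu.fderiv_right (m := 1) (by norm_num)).differentiable (by norm_num)
  have key : ∀ i j, hess u x i j = fderiv ℝ (fderiv ℝ u) x (Pi.single j 1) (Pi.single i 1) := by
    intro i j
    have h1 : fderiv ℝ (grad' u) x (Pi.single j 1) i
        = fderiv ℝ (fun y => grad' u y i) x (Pi.single j 1) := by
      rw [fderiv_apply (differentiable_grad' hu x) i]
      rfl
    have h2 : fderiv ℝ (fun y => fderiv ℝ u y (Pi.single i 1)) x (Pi.single j 1)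
        = fderiv ℝ (fderiv ℝ u) x (Pi.single j 1) (Pi.single i 1) := by
      rw [fderiv_clm_apply (h x) (differentiableAt_const _)]
      simp
    exact h1.trans h2
  have hs : IsSymmSndFDerivAt ℝ u x :=
    hu.contDiffAt.isSymmSndFDerivAt (by simp)
  ext i j
  rw [Matrix.transpose_apply, key, key]
  exact hs _ _

lemma grad'_sub {d : ℕ} {u v : (Fin d → ℝ) → ℝ} (hu : Differentiable ℝ u)
    (hv : Differentiable ℝ v) (x : Fin d → ℝ) :
    grad' (fun y => u y - v y) x = fun i => grad' u x i - grad' v x i := by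
  funext i
  simp only [grad']
  rw [fderiv_fun_sub (hu x) (hv x)]
  rfl

lemma jac_sub {d : ℕ} {φ ψ : (Fin d → ℝ) → (Fin d → ℝ)} (hφ : Differentiable ℝ φ)
    (hψ : Differentiable ℝ ψ) (x : Fin d → ℝ) :
    jac (fun y => φ y - ψ y) x = jac φ x - jac ψ x := by
  ext i j
  simp only [jac, Matrix.of_apply, Matrix.sub_apply]
  rw [fderiv_fun_sub (hφ x) (hψ x)]
  rfl

/-- Algebraic form of the integrand estimate: `e₀`, `p`, `q`, `M`, `E` stand for the values at a
point of `u - u_h`, `∇(u - u_h)`, `∇u - g_h`, `D(∇u - g_h)`, `D²u - H_h`. -/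
lemma pointwise_bound {d : ℕ} {θ α β γ C c e₀ : ℝ} (hθ : θ ∈ Set.Icc (0 : ℝ) 1)
    (A M E : Matrix (Fin d) (Fin d) ℝ) (b p q : Fin d → ℝ)
    (hA : Real.sqrt (frobSq A) ≤ α) (hb : Real.sqrt (vecSq b) ≤ β) (hc : |c| ≤ γ)
    (hC₀ : γ ≤ C) (hC₁ : 1 + (d : ℝ) * (1 - θ) * β ≤ C) (hC₂ : 1 + (d : ℝ) * θ * β ≤ C)
    (hC₃ : 1 + Real.sqrt 2 ≤ C) (hC₄ : 1 + (d : ℝ) ^ 2 * α ≤ C) :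
    (vecSq fun i => q i - p i) + frobSq (E - M) + (1 / 2 : ℝ) * frobSq (Mᵀ - M)
      + (frobInner A E + θ * (∑ i, b i * q i) + (1 - θ) * (∑ i, b i * p i) - c * e₀) ^ 2
    ≤ (5 * C ^ 2) * ((e₀ ^ 2 + vecSq p) + (vecSq q + frobSq M) + frobSq E) := by
  have h1 := vecSq_sub_le q p
  have h2 := frobSq_sub_le E M
  have h3 := frobSq_sub_le Mᵀ M
  rw [frobSq_transpose] at h3
  have r1 := sq_frobInner_le A E hA hC₄
  have r2 := sq_smul_dot_le b q hθ.1 hb hC₂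
  have r3 := sq_smul_dot_le b p (sub_nonneg.mpr hθ.2) hb hC₁
  have r4 : (c * e₀) ^ 2 ≤ C ^ 2 * e₀ ^ 2 := by
    rw [mul_pow, ← sq_abs c]
    have := hc.trans hC₀
    gcongr
  have hC : 4 ≤ C ^ 2 := by
    have : 1 ≤ Real.sqrt 2 := Real.one_le_sqrt.mpr (by norm_num)
    nlinarith
  have four : ∀ w x y z : ℝ, (w + x + y - z) ^ 2 ≤ 4 * (w ^ 2 + x ^ 2 + y ^ 2 + z ^ 2) := by
    intro w x y z
    nlinarith [sq_nonneg (w - x), sq_nonneg (w - y), sq_nonneg (w + z), sq_nonneg (x - y),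
      sq_nonneg (x + z), sq_nonneg (y + z)]
  have h4 := four (frobInner A E) (θ * ∑ i, b i * q i) ((1 - θ) * ∑ i, b i * p i) (c * e₀)
  have n1 := mul_nonneg (sub_nonneg.mpr hC) (vecSq_nonneg p)
  have n2 := mul_nonneg (sub_nonneg.mpr hC) (vecSq_nonneg q)
  have n3 := mul_nonneg (sub_nonneg.mpr hC) (frobSq_nonneg M)
  have n4 := mul_nonneg (sub_nonneg.mpr hC) (frobSq_nonneg E)
  have n5 := mul_nonneg (sub_nonneg.mpr hC) (sq_nonneg e₀)
  have := vecSq_nonneg p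
  have := vecSq_nonneg q
  have := frobSq_nonneg M
  have := frobSq_nonneg E
  have := sq_nonneg e₀
  nlinarith

/-- **a posteriori residual lower bound / local efficiency.**
With `u` an exact solution of `A : D²u + b·∇u − cu = f` a.e. in `Ω` and `(u_h, g_h, H_h)`
any discrete triple, the local least-squares error indicator over an open `ω ⊆ Ω` is
bounded by the local error:
`∫_ω ‖∇u_h − g_h‖² + ∫_ω ‖Dg_h − H_h‖_F² + (1/2)∫_ω ‖Dg_h − Dg_hᵀ‖_F²
  + ∫_ω (L_θ(u_h,g_h,H_h) − f)²
  ≤ C_ω·(‖u − u_h‖²_{H¹(ω)} + ‖∇u − g_h‖²_{H¹(ω)} + ∫_ω ‖D²u − H_h‖_F²)`,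
with `C_ω = 5·(max(‖c‖_{L^∞(ω)}, 1 + d(1−θ)‖b‖_{L^∞(ω)}, 1 + dθ‖b‖_{L^∞(ω)}, 1 + √2,
1 + d²‖A‖_{L^∞(ω)}))²`. -/
theorem aposteriori_residual_lower_bound
    {d : ℕ} (Ω ω : Set (Fin d → ℝ)) (hΩ : IsOpen Ω) (hbdΩ : IsBounded Ω)
    (hω : IsOpen ω) (hωΩ : ω ⊆ Ω)
    (θ : ℝ) (hθ : θ ∈ Set.Icc (0 : ℝ) 1)
    (A : (Fin d → ℝ) → Matrix (Fin d) (Fin d) ℝ)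
    (hAmeas : ∀ i j, Measurable fun x => A x i j)
    (hAsymm : ∀ x, (A x).IsSymm)
    (b : (Fin d → ℝ) → Fin d → ℝ) (hbmeas : ∀ i, Measurable fun x => b x i)
    (c : (Fin d → ℝ) → ℝ) (hcmeas : Measurable c) (hc : ∀ x, 0 ≤ c x)
    (αbd βbd cbd : ℝ)
    (hAbdd : ∀ᵐ x ∂(volume.restrict ω), Real.sqrt (frobSq (A x)) ≤ αbd)
    (hbbdd : ∀ᵐ x ∂(volume.restrict ω), Real.sqrt (vecSq (b x)) ≤ βbd)
    (hcbdd : ∀ᵐ x ∂(volume.restrict ω), |c x| ≤ cbd)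
    (f : (Fin d → ℝ) → ℝ)
    (u : (Fin d → ℝ) → ℝ) (hu : ContDiff ℝ 2 u)
    (hpde : ∀ᵐ x ∂(volume.restrict Ω),
      frobInner (A x) (hess u x) + (∑ i, b x i * grad' u x i) - c x * u x = f x)
    (uh : (Fin d → ℝ) → ℝ) (huh : ContDiff ℝ 1 uh)
    (gh : (Fin d → ℝ) → (Fin d → ℝ)) (hgh : ContDiff ℝ 1 gh)
    (Hh : (Fin d → ℝ) → Matrix (Fin d) (Fin d) ℝ)
    (hHhmeas : ∀ i j, Measurable fun x => Hh x i j)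
    (hHhsymm : ∀ x, (Hh x).IsSymm)
    (hHhL2 : Integrable (fun x => frobSq (Hh x)) (volume.restrict ω))
    -- finiteness of all the integrals involved
    (hint1 : Integrable (fun x => (u x - uh x) ^ 2) (volume.restrict ω))
    (hint2 : Integrable (fun x => vecSq (grad' (fun y => u y - uh y) x))
      (volume.restrict ω))
    (hint3 : Integrable (fun x => vecSq fun i => grad' u x i - gh x i)
      (volume.restrict ω))
    (hint4 : Integrable (fun x => frobSq (jac (fun y => grad' u y - gh y) x))
      (volume.restrict ω))
    (hint5 : Integrable (fun x => frobSq (hess u x - Hh x)) (volume.restrict ω))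
    (hint6 : Integrable (fun x => vecSq fun i => grad' uh x i - gh x i)
      (volume.restrict ω))
    (hint7 : Integrable (fun x => frobSq (jac gh x - Hh x)) (volume.restrict ω))
    (hint8 : Integrable (fun x => frobSq (jac gh x - (jac gh x)ᵀ)) (volume.restrict ω))
    (hint9 : Integrable (fun x => (Ltheta A b c θ uh gh Hh x - f x) ^ 2)
      (volume.restrict ω)) :
    (∫ x in ω, vecSq fun i => grad' uh x i - gh x i)
        + (∫ x in ω, frobSq (jac gh x - Hh x))
        + (1 / 2 : ℝ) * (∫ x in ω, frobSq (jac gh x - (jac gh x)ᵀ))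
        + (∫ x in ω, (Ltheta A b c θ uh gh Hh x - f x) ^ 2)
      ≤ (5 * (max cbd (max (1 + (d : ℝ) * (1 - θ) * βbd)
            (max (1 + (d : ℝ) * θ * βbd)
              (max (1 + Real.sqrt 2) (1 + (d : ℝ) ^ 2 * αbd))))) ^ 2)
        * (((∫ x in ω, (u x - uh x) ^ 2)
              + ∫ x in ω, vecSq (grad' (fun y => u y - uh y) x))
            + ((∫ x in ω, vecSq fun i => grad' u x i - gh x i)
              + ∫ x in ω, frobSq (jac (fun y => grad' u y - gh y) x))
            + ∫ x in ω, frobSq (hess u x - Hh x)) := by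
  generalize hCdef : max cbd (max (1 + (d : ℝ) * (1 - θ) * βbd)
    (max (1 + (d : ℝ) * θ * βbd)
      (max (1 + Real.sqrt 2) (1 + (d : ℝ) ^ 2 * αbd)))) = C
  obtain ⟨hC₀, hC₁, hC₂, hC₃, hC₄⟩ : cbd ≤ C ∧ 1 + (d : ℝ) * (1 - θ) * βbd ≤ C ∧
      1 + (d : ℝ) * θ * βbd ≤ C ∧ 1 + Real.sqrt 2 ≤ C ∧ 1 + (d : ℝ) ^ 2 * αbd ≤ C := by
    simpa only [max_le_iff] using hCdef.le
  have hdg := differentiable_grad' hu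
  have hdu : Differentiable ℝ u := hu.differentiable (by norm_num)
  have hduh : Differentiable ℝ uh := huh.differentiable (by norm_num)
  have hdgh : Differentiable ℝ gh := hgh.differentiable (by norm_num)
  rw [← integral_const_mul, ← integral_add hint6 hint7,
    ← integral_add (hint6.fun_add hint7) (hint8.const_mul _),
    ← integral_add ((hint6.fun_add hint7).fun_add (hint8.const_mul _)) hint9,
    ← integral_add hint1 hint2, ← integral_add hint3 hint4,
    ← integral_add (hint1.fun_add hint2) (hint3.fun_add hint4),
    ← integral_add ((hint1.fun_add hint2).fun_add (hint3.fun_add hint4)) hint5, ← integral_const_mul]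
  refine integral_mono_ae (((hint6.fun_add hint7).fun_add (hint8.const_mul _)).fun_add hint9)
    ((((hint1.fun_add hint2).fun_add (hint3.fun_add hint4)).fun_add hint5).const_mul _) ?_
  filter_upwards [hAbdd, hbbdd, hcbdd, ae_restrict_of_ae_restrict_of_subset hωΩ hpde]
    with x hA hb hcx hf
  have key := pointwise_bound (e₀ := u x - uh x) hθ (A x)
    (jac (fun y => grad' u y - gh y) x) (hess u x - Hh x) (b x)
    (grad' (fun y => u y - uh y) x) (fun i => grad' u x i - gh x i) hA hb hcx hC₀ hC₁ hC₂ hC₃ hC₄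
  have e1 : (fun i => grad' u x i - gh x i - grad' (fun y => u y - uh y) x i)
      = fun i => grad' uh x i - gh x i := by
    funext i
    rw [grad'_sub hdu hduh]
    ring
  have hjac : jac (fun y => grad' u y - gh y) x = hess u x - jac gh x := jac_sub hdg hdgh x
  have e2 : hess u x - Hh x - jac (fun y => grad' u y - gh y) x = jac gh x - Hh x := by
    rw [hjac]
    abel
  have e3 : (jac (fun y => grad' u y - gh y) x)ᵀ - jac (fun y => grad' u y - gh y) x
      = jac gh x - (jac gh x)ᵀ := by
    rw [hjac, Matrix.transpose_sub, hess_isSymm hu]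
    abel
  -- The equation at `x` turns the residual into (minus) the operator applied to the errors.
  have e4 : frobInner (A x) (hess u x - Hh x)
        + θ * (∑ i, b x i * (grad' u x i - gh x i))
        + (1 - θ) * (∑ i, b x i * grad' (fun y => u y - uh y) x i) - c x * (u x - uh x)
      = -(Ltheta A b c θ uh gh Hh x - f x) := by
    rw [← hf, grad'_sub hdu hduh]
    simp only [Ltheta, frobInner, Matrix.sub_apply, mul_sub, mul_add, Finset.sum_sub_distrib,
      Finset.sum_add_distrib, Finset.mul_sum, sub_mul, one_mul, mul_left_comm (b x _) θ]
    ring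
  rw [e1, e2, e3, e4, neg_sq] at key
  exact key
end
end

section
/- (Failure of coercivity without the zero tangential-trace condition.) Let D ⊂ ℝ² be the open unit disk. For every constant C > 0 there exists a smooth vector field ψ : ℝ² → ℝ², not almost everywhere zero on D, such that div ψ = 0 and ∂₁ψ₂ − ∂₂ψ₁ = 0 everywhere on D, and ∫_D (‖ψ‖² + (div ψ)² + (∂₁ψ₂ − ∂₂ψ₁)²) < C·( ∫_D ‖ψ‖² + ∫_D ‖Dψ‖_F² ). Equivalently, the estimate ‖ψ‖²_{L²(D)} + ‖rot ψ‖²_{L²(D)} + ‖div ψ‖²_{L²(D)} ≥ C‖ψ‖²_{H¹(D)} fails on the full space of H¹ vector fields for every C > 0. -/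
/-!
The witness is `ψ = ∇v / k` for the harmonic function `v = exp (k x₁) cos (k x₂)`, that is
`ψ = exp (k x₁) (cos (k x₂), - sin (k x₂))`.  It is divergence-free and curl-free, and pointwise
`‖ψ‖² = exp (2 k x₁)` and `‖Dψ‖_F² = 2 k² ‖ψ‖²`.  Hence, with `I = ∫_D ‖ψ‖² > 0`, the claim reads
`I < C (1 + 2 k²) I`, which holds for `k = 1 / √C`.  Compared with the gradients of
`Re (x₁ + i x₂)^n`, this family needs no integral to be evaluated, because the ratio of the two
densities is constant.
-/

open MeasureTheory Matrix Finset Bornology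

noncomputable section

/-- The open unit disk in `ℝ²`. -/
def unitDisk : Set (Fin 2 → ℝ) := {x | (x 0) ^ 2 + (x 1) ^ 2 < 1}

/-- The scalar curl (rotation) of a planar vector field: `rot ψ = ∂₁ψ₂ − ∂₂ψ₁`. -/
def rot2 (ψ : (Fin 2 → ℝ) → (Fin 2 → ℝ)) (x : Fin 2 → ℝ) : ℝ :=
  jac ψ x 1 0 - jac ψ x 0 1

/-- The normalised gradient of the harmonic function `exp (k x₁) cos (k x₂)`. -/
def expField (k : ℝ) (x : Fin 2 → ℝ) : Fin 2 → ℝ :=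
  ![Real.exp (k * x 0) * Real.cos (k * x 1), -(Real.exp (k * x 0) * Real.sin (k * x 1))]

lemma contDiff_expField (k : ℝ) : ContDiff ℝ (⊤ : ℕ∞) (expField k) := by
  rw [contDiff_pi]
  intro i
  fin_cases i
  · change ContDiff ℝ _ fun x : Fin 2 → ℝ => Real.exp (k * x 0) * Real.cos (k * x 1)
    fun_prop
  · change ContDiff ℝ _ fun x : Fin 2 → ℝ => -(Real.exp (k * x 0) * Real.sin (k * x 1))
    fun_prop

lemma jac_expField (k : ℝ) (x : Fin 2 → ℝ) :
    jac (expField k) x =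
      !![k * (Real.exp (k * x 0) * Real.cos (k * x 1)),
          -(k * (Real.exp (k * x 0) * Real.sin (k * x 1)));
        -(k * (Real.exp (k * x 0) * Real.sin (k * x 1))),
          -(k * (Real.exp (k * x 0) * Real.cos (k * x 1)))] := by
  have hp : ∀ i : Fin 2, HasFDerivAt (fun y : Fin 2 → ℝ => k * y i)
      (k • ContinuousLinearMap.proj (R := ℝ) (φ := fun _ : Fin 2 => ℝ) i) x := fun i =>
    (hasFDerivAt_apply i x).const_mul k
  have h0 := (hp 0).exp.mul (hp 1).cos
  have h1 := ((hp 0).exp.mul (hp 1).sin).neg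
  have hd : DifferentiableAt ℝ (expField k) x :=
    (contDiff_expField k).differentiable (by simp) x
  have hc : ∀ i v, fderiv ℝ (expField k) x v i = fderiv ℝ (fun y => expField k y i) x v := by
    intro i v
    rw [fderiv_apply hd i]
    rfl
  have e0 := h0.fderiv
  have e1 := h1.fderiv
  have f0 : ∀ v, fderiv ℝ (expField k) x v 0 = _ := fun v =>
    (hc 0 v).trans (congrArg (fun L : (Fin 2 → ℝ) →L[ℝ] ℝ => L v) e0)
  have f1 : ∀ v, fderiv ℝ (expField k) x v 1 = _ := fun v =>
    (hc 1 v).trans (congrArg (fun L : (Fin 2 → ℝ) →L[ℝ] ℝ => L v) e1)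
  ext i j
  fin_cases i <;> fin_cases j <;> simp [jac, f0, f1] <;> ring

lemma vecSq_expField (k : ℝ) (x : Fin 2 → ℝ) :
    vecSq (expField k x) = Real.exp (k * x 0) ^ 2 := by
  simp only [vecSq, expField, Fin.sum_univ_two, Matrix.cons_val_zero, Matrix.cons_val_one]
  linear_combination Real.exp (k * x 0) ^ 2 * Real.sin_sq_add_cos_sq (k * x 1)

lemma frobSq_jac_expField (k : ℝ) (x : Fin 2 → ℝ) :
    frobSq (jac (expField k) x) = 2 * k ^ 2 * vecSq (expField k x) := by
  rw [vecSq_expField, jac_expField]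
  simp [frobSq, frobInner, Fin.sum_univ_two]
  linear_combination
    2 * k ^ 2 * Real.exp (k * x 0) ^ 2 * Real.sin_sq_add_cos_sq (k * x 1)

lemma divg_expField (k : ℝ) (x : Fin 2 → ℝ) : divg (expField k) x = 0 := by
  simp [divg, jac_expField, Fin.sum_univ_two]

lemma rot2_expField (k : ℝ) (x : Fin 2 → ℝ) : rot2 (expField k) x = 0 := by
  simp [rot2, jac_expField]

lemma isOpen_unitDisk : IsOpen unitDisk :=
  isOpen_lt (by fun_prop) continuous_const

lemma volume_unitDisk_pos : 0 < volume unitDisk :=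
  isOpen_unitDisk.measure_pos volume ⟨0, by simp [unitDisk]⟩

lemma unitDisk_subset_Icc : unitDisk ⊆ Set.Icc (-1) 1 := by
  intro x hx
  have hx' : x 0 ^ 2 + x 1 ^ 2 < 1 := hx
  constructor <;> intro i <;> fin_cases i <;> simp <;> nlinarith [sq_nonneg (x 0), sq_nonneg (x 1)]

lemma integral_vecSq_expField_pos (k : ℝ) : 0 < ∫ x in unitDisk, vecSq (expField k x) := by
  simp only [vecSq_expField]
  have hint : IntegrableOn (fun x : Fin 2 → ℝ => Real.exp (k * x 0) ^ 2) unitDisk :=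
    (Continuous.integrableOn_Icc (by fun_prop)).mono_set unitDisk_subset_Icc
  rw [setIntegral_pos_iff_support_of_nonneg_ae (Filter.Eventually.of_forall fun x => by positivity)
    hint]
  have hs : Function.support (fun x : Fin 2 → ℝ => Real.exp (k * x 0) ^ 2) = Set.univ := by
    ext x
    simp
  rw [hs, Set.univ_inter]
  exact volume_unitDisk_pos

/-- **failure of coercivity without the zero tangential-trace condition.**
For every `C > 0` there is a smooth vector field `ψ` on `ℝ²`, not a.e. zero on the unit
disk `D`, which is divergence-free and curl-free everywhere on `D`, such that
`∫_D (‖ψ‖² + (div ψ)² + (rot ψ)²) < C·(∫_D ‖ψ‖² + ∫_D ‖Dψ‖_F²)`; hence the estimate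
`‖ψ‖²_{L²(D)} + ‖rot ψ‖²_{L²(D)} + ‖div ψ‖²_{L²(D)} ≥ C‖ψ‖²_{H¹(D)}` fails on the full
space of `H¹` vector fields for every `C > 0`. -/
theorem coercivity_fails_without_tangential_trace (C : ℝ) (hC : 0 < C) :
    ∃ ψ : (Fin 2 → ℝ) → (Fin 2 → ℝ),
      ContDiff ℝ (⊤ : ℕ∞) ψ ∧
      ¬ (∀ᵐ x ∂(volume.restrict unitDisk), ψ x = 0) ∧
      (∀ x ∈ unitDisk, divg ψ x = 0) ∧
      (∀ x ∈ unitDisk, rot2 ψ x = 0) ∧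
      (∫ x in unitDisk, (vecSq (ψ x) + (divg ψ x) ^ 2 + (rot2 ψ x) ^ 2))
        < C * ((∫ x in unitDisk, vecSq (ψ x)) + ∫ x in unitDisk, frobSq (jac ψ x)) := by
  -- With `k = 1 / √C` one gets `C * (1 + 2 * k ^ 2) = C + 2 > 1`.
  set k : ℝ := 1 / √C with hk
  have hkC : C * k ^ 2 = 1 := by
    rw [hk, div_pow, Real.sq_sqrt hC.le]
    field_simp
  have hI := integral_vecSq_expField_pos k
  refine ⟨expField k, contDiff_expField k, ?_, fun x _ => divg_expField k x,
    fun x _ => rot2_expField k x, ?_⟩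
  · intro h
    have h0 : ∫ x in unitDisk, vecSq (expField k x) = 0 :=
      integral_eq_zero_of_ae (h.mono fun x hx => by simp [hx, vecSq])
    exact hI.ne' h0
  · simp only [divg_expField, rot2_expField, frobSq_jac_expField, integral_const_mul]
    simp only [ne_eq, OfNat.ofNat_ne_zero, not_false_eq_true, zero_pow, add_zero]
    set I := ∫ x in unitDisk, vecSq (expField k x)
    have hr : C * (I + 2 * k ^ 2 * I) = C * I + 2 * I := by
      linear_combination 2 * I * hkC
    rw [hr]
    nlinarith [mul_pos hC hI]
end
end
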